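/- arXiv:2001.08825 — 2 statements merged into one kernel-verified Lean document; each statement's English description precedes it below -/
import Mathlib

section
/- Let α ∈ (0,2), n ∈ ℕ (n ≥ 0), and x ∈ ℝ. Then the function y ↦ (μ_n'(x−y) − μ_n'(x+y))·y^(−α) is absolutely integrable on (0,∞), and (c_α/α)·∫₀^∞ (μ_n'(x−y) − μ_n'(x+y))·y^(−α) dy = (Γ(1+α)/(ix+1)^(1+α)) · ∑_{k=0}^{n} C(n,k)·C(−1−α,k)·(2/(ix+1))^k. (The right-hand side is the terminating hypergeometric expression (Γ(1+α)/(ix+1)^(1+α))·₂F₁(−n, 1+α; 1; 2/(ix+1)); in particular it equals Γ(1+α)/(ix+1)^(1+α) when n = 0.) -/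
open MeasureTheory Finset

/-- The constant `c_α = α·2^(α−1)·Γ(1/2+α/2)/(√π·Γ(1−α/2))`. -/
noncomputable def cFrac (α : ℝ) : ℝ :=
  α * 2 ^ (α - 1) * Real.Gamma (1 / 2 + α / 2) / (Real.sqrt Real.pi * Real.Gamma (1 - α / 2))

/-- The complex Higgins function `λ_n(x) = ((ix−1)/(ix+1))^n`. -/
noncomputable def higgins (n : ℤ) (x : ℝ) : ℂ :=
  ((Complex.I * (x : ℂ) - 1) / (Complex.I * (x : ℂ) + 1)) ^ n

/-- The derivative `λ_n'`. -/
noncomputable def higgins' (n : ℤ) (x : ℝ) : ℂ := deriv (higgins n) x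

/-- The complex Christov function `μ_n(x) = (ix−1)^n/(ix+1)^(n+1)`. -/
noncomputable def christov (n : ℤ) (x : ℝ) : ℂ :=
  (Complex.I * (x : ℂ) - 1) ^ n / (Complex.I * (x : ℂ) + 1) ^ (n + 1)

/-- The derivative `μ_n'`. -/
noncomputable def christov' (n : ℤ) (x : ℝ) : ℂ := deriv (christov n) x

/-- Generalized binomial coefficient `C(z,k) = z(z−1)⋯(z−k+1)/k!` over `ℂ`. -/
noncomputable def gbinom (z : ℂ) (k : ℕ) : ℂ :=
  (∏ i ∈ Finset.range k, (z - (i : ℂ))) / (k.factorial : ℂ)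

/-- Generalized binomial coefficient `C(z,k) = z(z−1)⋯(z−k+1)/k!` over `ℝ`. -/
noncomputable def gbinomR (z : ℝ) (k : ℕ) : ℝ :=
  (∏ i ∈ Finset.range k, (z - (i : ℝ))) / (k.factorial : ℝ)

/-- Rising factorial (Pochhammer symbol) `(z)_k = z(z+1)⋯(z+k−1)` over `ℂ`. -/
noncomputable def poch (z : ℂ) (k : ℕ) : ℂ := ∏ i ∈ Finset.range k, (z + (i : ℂ))

/-- `G_α(l) = (1/(l+1))·∑_{k=0}^{l} C(l+1,k+1)·C(−1−α,k)·2^k = ₂F₁(−l, 1+α; 2; 2)`, over `ℂ`. -/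
noncomputable def Gc (α : ℝ) (l : ℕ) : ℂ :=
  (1 / ((l : ℂ) + 1)) * ∑ k ∈ Finset.range (l + 1),
    gbinom ((l : ℂ) + 1) (k + 1) * gbinom (-1 - (α : ℂ)) k * 2 ^ k

/-- `G_α(l) = (1/(l+1))·∑_{k=0}^{l} C(l+1,k+1)·C(−1−α,k)·2^k = ₂F₁(−l, 1+α; 2; 2)`, over `ℝ`. -/
noncomputable def GR (α : ℝ) (l : ℕ) : ℝ :=
  (1 / ((l : ℝ) + 1)) * ∑ k ∈ Finset.range (l + 1),
    gbinomR ((l : ℝ) + 1) (k + 1) * gbinomR (-1 - α) k * 2 ^ k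

/-- `H_α(l) = ∑_{k=0}^{l} C(l,k)·C(−1−α,k)·2^k = ₂F₁(−l, 1+α; 1; 2)`, over `ℂ`. -/
noncomputable def Hc (α : ℝ) (l : ℕ) : ℂ :=
  ∑ k ∈ Finset.range (l + 1), gbinom (l : ℂ) k * gbinom (-1 - (α : ℂ)) k * 2 ^ k

/-- `H_α(l) = ∑_{k=0}^{l} C(l,k)·C(−1−α,k)·2^k = ₂F₁(−l, 1+α; 1; 2)`, over `ℝ`. -/
noncomputable def HR (α : ℝ) (l : ℕ) : ℝ :=
  ∑ k ∈ Finset.range (l + 1), gbinomR (l : ℝ) k * gbinomR (-1 - α) k * 2 ^ k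

/-- `arccot(x) = π/2 − arctan(x) ∈ (0,π)`. -/
noncomputable def arccot (x : ℝ) : ℝ := Real.pi / 2 - Real.arctan x

/-!
Write `z = ix + 1`. The binomial theorem expands `μ_n` in the powers `(ix + 1)^(-(k+1))`, which
reduces the claim to `K_m(w) = ∫₀^∞ ((w - iy)^(-(m+1)) - (w + iy)^(-(m+1))) y^(-α) dy` with
`m = k + 1` and `w = z`, on the half-plane `Re w > 0`. Each `K_m` is holomorphic with
`K_m' = -(m+1) K_{m+1}`, and the scaling `y ↦ ry` makes it homogeneous of degree `-(m + α)` along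
the positive reals, so `K_m(w) = w^(-(m+α)) K_m(1)` by the identity theorem. Comparing derivatives
at `1` yields `K_{m+1}(1) = (α + m)/(m + 1) K_m(1)`, and `K_1(1)` is a beta integral, which the
duplication formula for `Γ` combines with `c_α`. The expansion involves only `m ≥ 1`, for which
`K_m` converges for all `-1 < α < 2`; this is why negative `α > -1` is covered too.
-/

section BetaIntegral

lemma image_div_one_add_Ioi_zero : (fun u : ℝ => u / (1 + u)) '' Set.Ioi 0 = Set.Ioo 0 1 := by
  ext t
  constructor
  · rintro ⟨u, hu : 0 < u, rfl⟩
    exact ⟨by positivity, (div_lt_one (by positivity)).2 (lt_one_add u)⟩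
  · rintro ⟨ht₀, ht₁⟩
    have ht : 0 < 1 - t := sub_pos.2 ht₁
    refine ⟨t / (1 - t), div_pos ht₀ ht, ?_⟩
    field_simp
    ring

lemma injOn_div_one_add_Ioi_zero : Set.InjOn (fun u : ℝ => u / (1 + u)) (Set.Ioi 0) := by
  intro u (hu : 0 < u) v (hv : 0 < v) huv
  rw [div_eq_div_iff (by positivity) (by positivity)] at huv
  linarith

lemma hasDerivAt_div_one_add {u : ℝ} (hu : 1 + u ≠ 0) :
    HasDerivAt (fun u : ℝ => u / (1 + u)) (1 / (1 + u) ^ 2) u :=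
  ((hasDerivAt_id u).div ((hasDerivAt_id u).const_add 1) hu).congr_deriv (by simp)

lemma betaIntegral_eq_integral_Ioi (a b : ℂ) :
    Complex.betaIntegral a b =
      ∫ u in Set.Ioi (0 : ℝ), (u : ℂ) ^ (a - 1) / (1 + (u : ℂ)) ^ (a + b) := by
  rw [Complex.betaIntegral, intervalIntegral.integral_of_le zero_le_one,
    integral_Ioc_eq_integral_Ioo, ← image_div_one_add_Ioi_zero,
    integral_image_eq_integral_abs_deriv_smul measurableSet_Ioi
      (fun u (hu : 0 < u) => (hasDerivAt_div_one_add (by positivity)).hasDerivWithinAt)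
      injOn_div_one_add_Ioi_zero]
  refine setIntegral_congr_fun measurableSet_Ioi fun u (hu : 0 < u) => ?_
  have hv : 0 < 1 + u := by positivity
  have hv₀ : ((1 + u : ℝ) : ℂ) ≠ 0 := Complex.ofReal_ne_zero.2 hv.ne'
  have hv_arg : ((1 + u : ℝ) : ℂ).arg ≠ Real.pi := by
    rw [Complex.arg_ofReal_of_nonneg hv.le]
    exact Real.pi_ne_zero.symm
  have h_left : ((u / (1 + u) : ℝ) : ℂ) ^ (a - 1) =
      (u : ℂ) ^ (a - 1) * ((1 + u : ℝ) : ℂ) ^ (-(a - 1)) := by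
    rw [div_eq_mul_inv, Complex.ofReal_mul,
      Complex.mul_cpow_ofReal_nonneg hu.le (inv_nonneg.2 hv.le), Complex.ofReal_inv,
      Complex.inv_cpow _ _ hv_arg, Complex.cpow_neg]
  have h_right : (1 - ((u / (1 + u) : ℝ) : ℂ)) ^ (b - 1) =
      ((1 + u : ℝ) : ℂ) ^ (-(b - 1)) := by
    have : 1 - ((u / (1 + u) : ℝ) : ℂ) = ((1 + u : ℝ) : ℂ)⁻¹ := by
      push_cast at hv₀ ⊢
      field_simp
      ring
    rw [this, Complex.inv_cpow _ _ hv_arg, Complex.cpow_neg]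
  have h_exp : -(a + b) = -(a - 1) + -(b - 1) + -(2 : ℕ) := by push_cast; ring
  simp only [h_left, h_right, Complex.real_smul, abs_of_pos (one_div_pos.2 (pow_pos hv 2))]
  rw [← Complex.ofReal_one, ← Complex.ofReal_add, div_eq_mul_inv _ (_ ^ (a + b)),
    ← Complex.cpow_neg, h_exp, Complex.cpow_add _ _ hv₀, Complex.cpow_add _ _ hv₀,
    Complex.cpow_neg _ (2 : ℕ), Complex.cpow_natCast]
  push_cast
  ring

end BetaIntegral

section HalfPlane

lemma isOpen_re_pos : IsOpen {z : ℂ | 0 < z.re} :=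
  isOpen_lt continuous_const Complex.continuous_re

lemma eq_cpow_mul_of_homogeneous {f : ℂ → ℂ} {s : ℂ} (hf : DifferentiableOn ℂ f {z | 0 < z.re})
    (hhom : ∀ r : ℝ, 0 < r → f r = (r : ℂ) ^ s * f 1) {w : ℂ} (hw : 0 < w.re) :
    f w = w ^ s * f 1 := by
  have hg : DifferentiableOn ℂ (fun z => z ^ s * f 1) {z | 0 < z.re} := fun z hz =>
    ((differentiableAt_id.cpow_const (Or.inl hz)).mul_const _).differentiableWithinAt
  refine (hf.analyticOnNhd isOpen_re_pos).eqOn_of_preconnected_of_frequently_eq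
    (hg.analyticOnNhd isOpen_re_pos) (convex_halfSpace_re_gt 0).isPreconnected
    (z₀ := 1) (by simp) ?_ hw
  have hlim : Filter.Tendsto (fun r : ℝ => (r : ℂ)) (nhdsWithin 1 {1}ᶜ) (nhdsWithin 1 {1}ᶜ) :=
    tendsto_nhdsWithin_of_tendsto_nhds_of_eventually_within _
      ((Complex.continuous_ofReal.tendsto' 1 1 Complex.ofReal_one).mono_left nhdsWithin_le_nhds)
      (by filter_upwards [self_mem_nhdsWithin] with r hr using by simpa using hr)
  refine hlim.frequently (Filter.Eventually.frequently ?_)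
  filter_upwards [nhdsWithin_le_nhds (lt_mem_nhds one_pos)] with r hr using hhom r hr

lemma add_I_mul_ne_zero {w : ℂ} (hw : 0 < w.re) (t : ℝ) : w + Complex.I * t ≠ 0 := fun h =>
  hw.ne' (by simpa using congrArg Complex.re h)

lemma sub_I_mul_ne_zero {w : ℂ} (hw : 0 < w.re) (t : ℝ) : w - Complex.I * t ≠ 0 := by
  simpa [sub_eq_add_neg] using add_I_mul_ne_zero hw (-t)

lemma one_add_abs_le_mul_norm_add_I_mul {w : ℂ} {δ R : ℝ} (hδ : 0 < δ) (hre : δ ≤ w.re)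
    (hR : ‖w‖ ≤ R) (t : ℝ) : 1 + |t| ≤ (1 + (1 + R) / δ) * ‖w + Complex.I * t‖ := by
  have h_re : δ ≤ ‖w + Complex.I * t‖ :=
    hre.trans (by simpa using Complex.re_le_norm (w + Complex.I * t))
  have h_norm : |t| ≤ ‖w + Complex.I * t‖ + R := by
    calc |t| = ‖(w + Complex.I * t) - w‖ := by simp
      _ ≤ ‖w + Complex.I * t‖ + ‖w‖ := norm_sub_le _ _
      _ ≤ ‖w + Complex.I * t‖ + R := by gcongr
  have h_quot : 1 + R ≤ (1 + R) / δ * ‖w + Complex.I * t‖ := by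
    have : 0 ≤ R := (norm_nonneg w).trans hR
    rw [div_mul_eq_mul_div, le_div_iff₀ hδ]
    gcongr
  linarith

lemma norm_inv_add_I_mul_le {w : ℂ} {δ R : ℝ} (hδ : 0 < δ) (hre : δ ≤ w.re) (hR : ‖w‖ ≤ R)
    (t : ℝ) : ‖(w + Complex.I * t)⁻¹‖ ≤ (1 + (1 + R) / δ) / (1 + |t|) := by
  have h_pos : 0 < ‖w + Complex.I * t‖ :=
    norm_pos_iff.2 (add_I_mul_ne_zero (hδ.trans_le hre) t)
  rw [norm_inv, inv_eq_one_div, div_le_div_iff₀ h_pos (by positivity), one_mul]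
  exact one_add_abs_le_mul_norm_add_I_mul hδ hre hR t

end HalfPlane

lemma norm_pow_succ_sub_pow_succ_le {R : Type*} [SeminormedRing R] {a b : R} {M : ℝ}
    (ha : ‖a‖ ≤ M) (hb : ‖b‖ ≤ M) (m : ℕ) :
    ‖a ^ (m + 1) - b ^ (m + 1)‖ ≤ (m + 1) * M ^ m * ‖a - b‖ := by
  have hM : 0 ≤ M := (norm_nonneg a).trans ha
  induction m with
  | zero => simp
  | succ m ih =>
    calc ‖a ^ (m + 2) - b ^ (m + 2)‖
        = ‖a ^ (m + 1) * (a - b) + (a ^ (m + 1) - b ^ (m + 1)) * b‖ := by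
          congr 1; noncomm_ring
      _ ≤ ‖a‖ ^ (m + 1) * ‖a - b‖ + ‖a ^ (m + 1) - b ^ (m + 1)‖ * ‖b‖ :=
          (norm_add_le _ _).trans (add_le_add
            ((norm_mul_le _ _).trans (by gcongr; exact norm_pow_le' a m.succ_pos))
            (norm_mul_le _ _))
      _ ≤ M ^ (m + 1) * ‖a - b‖ + (m + 1) * M ^ m * ‖a - b‖ * M := by gcongr
      _ = ((m + 1 : ℕ) + 1) * M ^ (m + 1) * ‖a - b‖ := by push_cast; ring

lemma integrableOn_rpow_div_one_add_pow {a : ℝ} {p : ℕ} (ha : -1 < a) (hp : a + 1 < p) :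
    IntegrableOn (fun y : ℝ => y ^ a / (1 + y) ^ p) (Set.Ioi 0) := by
  have hmeas : Measurable fun y : ℝ => y ^ a / (1 + y) ^ p := by fun_prop
  rw [← Set.Ioc_union_Ioi_eq_Ioi (zero_le_one (α := ℝ))]
  refine IntegrableOn.union ?near_zero ?near_top
  case near_zero =>
    refine Integrable.mono' (intervalIntegral.intervalIntegrable_rpow' (a := 0) (b := 1) ha).1
      hmeas.aestronglyMeasurable ?_
    filter_upwards [ae_restrict_mem measurableSet_Ioc] with y ⟨hy, _⟩
    rw [Real.norm_of_nonneg (by positivity)]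
    exact div_le_self (by positivity) (one_le_pow₀ (by linarith))
  case near_top =>
    refine Integrable.mono' (integrableOn_Ioi_rpow_of_lt (a := a - p) (by linarith) one_pos)
      hmeas.aestronglyMeasurable ?_
    filter_upwards [ae_restrict_mem measurableSet_Ioi] with y (hy : 1 < y)
    have hy₀ : 0 < y := one_pos.trans hy
    rw [Real.norm_of_nonneg (by positivity), Real.rpow_sub hy₀, Real.rpow_natCast]
    gcongr
    linarith

section InvPowDiff

/-- The odd part `(w - iy)^(-(m+1)) - (w + iy)^(-(m+1))` of an inverse power along a vertical line.
The exponent is shifted by one so that it never vanishes. -/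
noncomputable def invPowDiff (m : ℕ) (w : ℂ) (y : ℝ) : ℂ :=
  ((w - Complex.I * y)⁻¹) ^ (m + 1) - ((w + Complex.I * y)⁻¹) ^ (m + 1)

lemma measurable_invPowDiff (m : ℕ) (w : ℂ) : Measurable (invPowDiff m w) := by
  unfold invPowDiff
  fun_prop

lemma invPowDiff_mul_mul (m : ℕ) (w : ℂ) (r y : ℝ) :
    invPowDiff m (r * w) (r * y) = ((r : ℂ) ^ (m + 1))⁻¹ * invPowDiff m w y := by
  have h_sub : r * w - Complex.I * ((r * y : ℝ) : ℂ) = r * (w - Complex.I * y) := by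
    push_cast; ring
  have h_add : r * w + Complex.I * ((r * y : ℝ) : ℂ) = r * (w + Complex.I * y) := by
    push_cast; ring
  rw [invPowDiff, invPowDiff, h_sub, h_add, mul_inv, mul_inv, mul_pow, mul_pow, inv_pow (r : ℂ),
    mul_sub]

lemma hasDerivAt_invPowDiff (m : ℕ) {w : ℂ} (hw : 0 < w.re) (y : ℝ) :
    HasDerivAt (invPowDiff m · y) (-(m + 1) * invPowDiff (m + 1) w y) w := by
  have h_deriv_sub := (((hasDerivAt_id w).sub_const (Complex.I * (y : ℂ))).inv
    (sub_I_mul_ne_zero hw y)).pow (m + 1)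
  have h_deriv_add := (((hasDerivAt_id w).add_const (Complex.I * (y : ℂ))).inv
    (add_I_mul_ne_zero hw y)).pow (m + 1)
  refine (h_deriv_sub.sub h_deriv_add).congr_deriv ?_
  simp only [invPowDiff, id, Nat.add_sub_cancel, Pi.inv_apply, neg_div, one_div, ← inv_pow]
  push_cast
  ring

lemma norm_invPowDiff_le (m : ℕ) {w : ℂ} {δ R y : ℝ} (hδ : 0 < δ) (hre : δ ≤ w.re)
    (hR : ‖w‖ ≤ R) (hy : 0 ≤ y) :
    ‖invPowDiff m w y‖ ≤
      2 * (m + 1) * (1 + (1 + R) / δ) ^ (m + 2) * (y / (1 + y) ^ (m + 2)) := by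
  have hw : 0 < w.re := hδ.trans_le hre
  have hR₀ : 0 ≤ R := (norm_nonneg w).trans hR
  set C := 1 + (1 + R) / δ
  have : 0 ≤ C := by positivity
  have h_add : ‖(w + Complex.I * y)⁻¹‖ ≤ C / (1 + y) := by
    simpa only [abs_of_nonneg hy] using norm_inv_add_I_mul_le hδ hre hR y
  have h_sub : ‖(w - Complex.I * y)⁻¹‖ ≤ C / (1 + y) := by
    simpa [sub_eq_add_neg, abs_of_nonneg hy] using norm_inv_add_I_mul_le hδ hre hR (-y)
  have h_diff : ‖(w - Complex.I * y)⁻¹ - (w + Complex.I * y)⁻¹‖ ≤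
      2 * y * ((C / (1 + y)) * (C / (1 + y))) := by
    have h_eq : (w - Complex.I * y)⁻¹ - (w + Complex.I * y)⁻¹ =
        (2 * y * Complex.I) * ((w - Complex.I * y)⁻¹ * (w + Complex.I * y)⁻¹) := by
      rw [inv_sub_inv (sub_I_mul_ne_zero hw y) (add_I_mul_ne_zero hw y), div_eq_mul_inv, mul_inv]
      ring
    have h_norm : ‖(2 * y * Complex.I : ℂ)‖ = 2 * y := by simp [abs_of_nonneg hy]
    rw [h_eq, norm_mul, norm_mul (_⁻¹), h_norm]
    gcongr
  calc ‖invPowDiff m w y‖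
      ≤ (m + 1) * (C / (1 + y)) ^ m * (2 * y * ((C / (1 + y)) * (C / (1 + y)))) :=
        (norm_pow_succ_sub_pow_succ_le h_sub h_add m).trans (by gcongr)
    _ = 2 * (m + 1) * C ^ (m + 2) * (y / (1 + y) ^ (m + 2)) := by
        rw [div_pow]
        field_simp
        ring

end InvPowDiff

section InvPowDiffIntegral

/-- The integral `∫₀^∞ ((w - iy)^(-(m+1)) - (w + iy)^(-(m+1))) y^(-α) dy`, which converges
absolutely for `Re w > 0` and `-m < α < 2`. Up to a constant, it is the fractional Laplacian of an
inverse power. -/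
noncomputable def invPowDiffIntegral (α : ℝ) (m : ℕ) (w : ℂ) : ℂ :=
  ∫ y in Set.Ioi (0 : ℝ), invPowDiff m w y * ((y ^ (-α) : ℝ) : ℂ)

lemma norm_invPowDiff_mul_rpow_le (α : ℝ) (m : ℕ) {w : ℂ} {δ R y : ℝ} (hδ : 0 < δ)
    (hre : δ ≤ w.re) (hR : ‖w‖ ≤ R) (hy : 0 < y) :
    ‖invPowDiff m w y * ((y ^ (-α) : ℝ) : ℂ)‖ ≤
      2 * (m + 1) * (1 + (1 + R) / δ) ^ (m + 2) * (y ^ (1 - α) / (1 + y) ^ (m + 2)) := by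
  rw [norm_mul, Complex.norm_of_nonneg (Real.rpow_nonneg hy.le _), sub_eq_add_neg,
    Real.rpow_add hy, Real.rpow_one, mul_div_right_comm, ← mul_assoc]
  gcongr
  exact norm_invPowDiff_le m hδ hre hR hy.le

lemma measurable_invPowDiff_mul_rpow (α : ℝ) (m : ℕ) (w : ℂ) :
    Measurable fun y : ℝ => invPowDiff m w y * ((y ^ (-α) : ℝ) : ℂ) :=
  (measurable_invPowDiff m w).mul (by fun_prop)

variable {α : ℝ} {m : ℕ} {w : ℂ}

lemma integrableOn_invPowDiff_mul_rpow (hm : -m < α) (hα : α < 2) (hw : 0 < w.re) :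
    IntegrableOn (fun y : ℝ => invPowDiff m w y * ((y ^ (-α) : ℝ) : ℂ)) (Set.Ioi 0) := by
  have h_bound := (integrableOn_rpow_div_one_add_pow (a := 1 - α) (p := m + 2) (by linarith)
    (by push_cast; linarith)).const_mul (2 * (m + 1) * (1 + (1 + ‖w‖) / w.re) ^ (m + 2))
  refine h_bound.mono' (measurable_invPowDiff_mul_rpow α m w).aestronglyMeasurable ?_
  filter_upwards [ae_restrict_mem measurableSet_Ioi] with y hy
  exact norm_invPowDiff_mul_rpow_le α m hw le_rfl le_rfl hy

lemma hasDerivAt_invPowDiffIntegral (hm : -m < α) (hα : α < 2) (hw : 0 < w.re) :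
    HasDerivAt (invPowDiffIntegral α m) (-(m + 1) * invPowDiffIntegral α (m + 1) w) w := by
  have hs : {z : ℂ | w.re / 2 < z.re} ∩ Metric.ball 0 (‖w‖ + 1) ∈ nhds w :=
    ((isOpen_lt continuous_const Complex.continuous_re).inter Metric.isOpen_ball).mem_nhds
      ⟨half_lt_self hw, by simp⟩
  have hm' : -((m + 1 : ℕ) : ℝ) < α := by push_cast; linarith
  have h_bound := (integrableOn_rpow_div_one_add_pow (a := 1 - α) (p := m + 1 + 2) (by linarith)
    (by push_cast at hm' ⊢; linarith)).const_mul
      (2 * ((m + 1 : ℕ) + 1) * (1 + (1 + (‖w‖ + 1)) / (w.re / 2)) ^ (m + 1 + 2))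
  refine (hasDerivAt_integral_of_dominated_loc_of_deriv_le hs
    (.of_forall fun z => (measurable_invPowDiff_mul_rpow α m z).aestronglyMeasurable)
    (integrableOn_invPowDiff_mul_rpow hm hα hw)
    (F' := fun z y => -(m + 1) * (invPowDiff (m + 1) z y * ((y ^ (-α) : ℝ) : ℂ)))
    ((measurable_invPowDiff_mul_rpow α (m + 1) w).const_mul _).aestronglyMeasurable
    ?_ (h_bound.const_mul ‖(-(m + 1) : ℂ)‖) ?_).2.congr_deriv (integral_const_mul _ _)
  · filter_upwards [ae_restrict_mem measurableSet_Ioi] with y hy z ⟨hz_re, hz_norm⟩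
    rw [norm_mul]
    gcongr
    exact norm_invPowDiff_mul_rpow_le α (m + 1) (half_pos hw) (le_of_lt hz_re)
      (mem_ball_zero_iff.1 hz_norm).le hy
  · filter_upwards with y z ⟨hz_re, _⟩
    exact ((hasDerivAt_invPowDiff m ((half_pos hw).trans hz_re) y).mul_const _).congr_deriv
      (mul_assoc _ _ _)

lemma invPowDiffIntegral_ofReal_mul (α : ℝ) (m : ℕ) (w : ℂ) {r : ℝ} (hr : 0 < r) :
    invPowDiffIntegral α m (r * w) =
      (r : ℂ) ^ (-((m : ℂ) + α)) * invPowDiffIntegral α m w := by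
  have hr₀ : (r : ℂ) ≠ 0 := Complex.ofReal_ne_zero.2 hr.ne'
  have h_subst := integral_comp_mul_left_Ioi'
    (fun y => invPowDiff m (r * w) y * ((y ^ (-α) : ℝ) : ℂ)) 0 hr
  rw [mul_zero] at h_subst
  rw [invPowDiffIntegral, ← h_subst, invPowDiffIntegral, ← integral_const_mul, ← integral_smul]
  refine setIntegral_congr_fun measurableSet_Ioi fun y (hy : 0 < y) => ?_
  have h_rpow : (((r * y) ^ (-α) : ℝ) : ℂ) = (r : ℂ) ^ (-(α : ℂ)) * ((y ^ (-α) : ℝ) : ℂ) := by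
    rw [Real.mul_rpow hr.le hy.le, Complex.ofReal_mul, Complex.ofReal_cpow hr.le,
      Complex.ofReal_neg]
  simp only [invPowDiff_mul_mul, h_rpow, Complex.real_smul]
  rw [neg_add, Complex.cpow_add _ _ hr₀, Complex.cpow_neg _ (m : ℂ), Complex.cpow_natCast, pow_succ]
  field_simp

lemma invPowDiffIntegral_eq_cpow_mul (hm : -m < α) (hα : α < 2) (hw : 0 < w.re) :
    invPowDiffIntegral α m w = w ^ (-((m : ℂ) + α)) * invPowDiffIntegral α m 1 :=
  eq_cpow_mul_of_homogeneous
    (fun _ hz => (hasDerivAt_invPowDiffIntegral hm hα hz).differentiableAt.differentiableWithinAt)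
    (fun r hr => by simpa using invPowDiffIntegral_ofReal_mul α m 1 hr) hw

lemma invPowDiffIntegral_succ_one (hm : -m < α) (hα : α < 2) :
    invPowDiffIntegral α (m + 1) 1 = (m + α) / (m + 1) * invPowDiffIntegral α m 1 := by
  have h_eq : invPowDiffIntegral α m =ᶠ[nhds 1]
      fun z => z ^ (-((m : ℂ) + α)) * invPowDiffIntegral α m 1 := by
    filter_upwards [isOpen_re_pos.mem_nhds (x := 1) (by simp)] with z hz
    exact invPowDiffIntegral_eq_cpow_mul hm hα hz
  have h_cpow : HasDerivAt (fun z : ℂ => z ^ (-((m : ℂ) + α)) * invPowDiffIntegral α m 1)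
      (-((m : ℂ) + α) * invPowDiffIntegral α m 1) 1 := by
    simpa using ((hasDerivAt_id (1 : ℂ)).cpow_const (c := -((m : ℂ) + α)) (by simp)).mul_const
      (invPowDiffIntegral α m 1)
  have h_deriv := (hasDerivAt_invPowDiffIntegral hm hα (w := 1) (by simp)).unique
    (h_cpow.congr_of_eventuallyEq h_eq)
  rw [div_mul_eq_mul_div, eq_div_iff (Nat.cast_add_one_ne_zero m)]
  linear_combination -h_deriv

lemma invPowDiff_one_one (y : ℝ) :
    invPowDiff 1 1 y = 2 * Complex.I * (2 * y / (1 + ((y ^ 2 : ℝ) : ℂ)) ^ 2) := by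
  have h_add : (1 : ℂ) + Complex.I * y ≠ 0 := add_I_mul_ne_zero (by simp) y
  have h_sub : (1 : ℂ) - Complex.I * y ≠ 0 := sub_I_mul_ne_zero (by simp) y
  have h_fac : 1 + ((y ^ 2 : ℝ) : ℂ) = (1 - Complex.I * y) * (1 + Complex.I * y) := by
    push_cast
    linear_combination (y : ℂ) ^ 2 * Complex.I_sq
  rw [invPowDiff, h_fac, inv_pow, inv_pow,
    inv_sub_inv (pow_ne_zero _ h_sub) (pow_ne_zero _ h_add), mul_pow]
  ring

lemma invPowDiffIntegral_one_one (hα : α ∈ Set.Ioo (-2) 2) :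
    invPowDiffIntegral α 1 1 =
      2 * Complex.I * ((Real.Gamma (1 - α / 2) * Real.Gamma (1 + α / 2) : ℝ) : ℂ) := by
  have h_beta : ∫ u in Set.Ioi (0 : ℝ), (u : ℂ) ^ (-(α : ℂ) / 2) / (1 + (u : ℂ)) ^ 2 =
      ((Real.Gamma (1 - α / 2) * Real.Gamma (1 + α / 2) : ℝ) : ℂ) := by
    have h := betaIntegral_eq_integral_Ioi ((1 - α / 2 : ℝ) : ℂ) ((1 + α / 2 : ℝ) : ℂ)
    rw [Complex.betaIntegral_eq_Gamma_mul_div _ _ (by simp; linarith [hα.2])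
      (by simp; linarith [hα.1]), ← Complex.ofReal_add, sub_add_add_cancel, one_add_one_eq_two,
      Complex.Gamma_ofReal, Complex.Gamma_ofReal, Complex.Gamma_ofReal, Real.Gamma_two,
      Complex.ofReal_one, div_one] at h
    rw [Complex.ofReal_mul, h]
    simp [neg_div]
  rw [← h_beta, ← integral_comp_rpow_Ioi_of_pos two_pos, ← integral_const_mul, invPowDiffIntegral]
  refine setIntegral_congr_fun measurableSet_Ioi fun y (hy : 0 < y) => ?_
  have h_rpow : ((y ^ 2 : ℝ) : ℂ) ^ (-(α : ℂ) / 2) = ((y ^ (-α) : ℝ) : ℂ) := by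
    have h_exp : -(α : ℂ) / 2 = ((-α / 2 : ℝ) : ℂ) := by push_cast; rfl
    rw [h_exp, ← Complex.ofReal_cpow (by positivity), ← Real.rpow_natCast_mul hy.le]
    congr 2
    push_cast
    ring
  simp only [invPowDiff_one_one, Real.rpow_two, h_rpow, Complex.real_smul]
  norm_num
  ring

end InvPowDiffIntegral

section GeneralizedBinomial

lemma gbinom_zero_right (z : ℂ) : gbinom z 0 = 1 := by simp [gbinom]

lemma gbinom_succ_right (z : ℂ) (k : ℕ) : gbinom z (k + 1) = gbinom z k * (z - k) / (k + 1) := by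
  rw [gbinom, gbinom, prod_range_succ, Nat.factorial_succ, Nat.cast_mul, Nat.cast_add_one]
  field_simp

lemma gbinom_natCast (n k : ℕ) : gbinom n k = n.choose k := by
  rw [Nat.cast_choose_eq_descPochhammer_div, descPochhammer_eval_eq_prod_range, gbinom]

end GeneralizedBinomial

section Christov

variable {α : ℝ}

lemma invPowDiffIntegral_add_one_one (hα : α ∈ Set.Ioo (-1) 2) (k : ℕ) :
    invPowDiffIntegral α (k + 1) 1 =
      (-1) ^ k * gbinom (-1 - α) k / (k + 1) * invPowDiffIntegral α 1 1 := by
  induction k with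
  | zero => simp [gbinom_zero_right]
  | succ k ih =>
    have hk : -((k + 1 : ℕ) : ℝ) < α := by push_cast; linarith [hα.1, k.cast_nonneg (α := ℝ)]
    have hk₁ : (k : ℂ) + 1 ≠ 0 := Nat.cast_add_one_ne_zero k
    rw [invPowDiffIntegral_succ_one hk hα.2, ih, gbinom_succ_right, pow_succ]
    push_cast
    field_simp
    ring

lemma invPowDiffIntegral_add_one (hα : α ∈ Set.Ioo (-1) 2) (k : ℕ) {w : ℂ} (hw : 0 < w.re) :
    invPowDiffIntegral α (k + 1) w = (-1) ^ k * gbinom (-1 - α) k / (k + 1) *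
      (2 * Complex.I * ((Real.Gamma (1 - α / 2) * Real.Gamma (1 + α / 2) : ℝ) : ℂ)) /
        (w ^ (1 + (α : ℂ)) * w ^ k) := by
  have hw₀ : w ≠ 0 := fun h => by simp [h] at hw
  have hm : -((k + 1 : ℕ) : ℝ) < α := by push_cast; linarith [hα.1, k.cast_nonneg (α := ℝ)]
  have h_exp : ((k + 1 : ℕ) : ℂ) + α = 1 + α + k := by push_cast; ring
  rw [invPowDiffIntegral_eq_cpow_mul hm hα.2 hw, h_exp, Complex.cpow_neg,
    Complex.cpow_add _ _ hw₀, Complex.cpow_natCast, invPowDiffIntegral_add_one_one hα,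
    invPowDiffIntegral_one_one ⟨by linarith [hα.1], hα.2⟩]
  exact inv_mul_eq_div _ _

lemma cFrac_div_mul_Gamma_mul_Gamma (hα : α < 2) (hα₀ : α ≠ 0) :
    cFrac α / α * (2 * (Real.Gamma (1 - α / 2) * Real.Gamma (1 + α / 2))) =
      Real.Gamma (1 + α) := by
  have h_Gamma : Real.Gamma (1 - α / 2) ≠ 0 := (Real.Gamma_pos_of_pos (by linarith)).ne'
  have h_dup : Real.Gamma (1 / 2 + α / 2) * Real.Gamma (1 + α / 2) =
      Real.Gamma (1 + α) * 2 ^ (-α) * √Real.pi := by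
    convert Real.Gamma_mul_Gamma_add_half (1 / 2 + α / 2) using 3 <;> ring_nf
  have h_two : (2 : ℝ) * 2 ^ (α - 1) * 2 ^ (-α) = 1 := by
    rw [Real.rpow_sub_one two_ne_zero, Real.rpow_neg two_pos.le]
    field_simp
  calc cFrac α / α * (2 * (Real.Gamma (1 - α / 2) * Real.Gamma (1 + α / 2)))
      = 2 * 2 ^ (α - 1) * (Real.Gamma (1 / 2 + α / 2) * Real.Gamma (1 + α / 2)) / √Real.pi := by
        rw [cFrac]
        generalize Real.Gamma (1 - α / 2) = G at h_Gamma ⊢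
        field_simp
    _ = 2 * 2 ^ (α - 1) * 2 ^ (-α) * Real.Gamma (1 + α) := by
        rw [h_dup]
        field_simp
    _ = Real.Gamma (1 + α) := by rw [h_two, one_mul]

lemma I_mul_ofReal_add_one_ne_zero (x : ℝ) : Complex.I * (x : ℂ) + 1 ≠ 0 := by
  simpa [add_comm] using add_I_mul_ne_zero (w := 1) (by simp) x

lemma christov_natCast (n : ℕ) (x : ℝ) :
    christov n x = ∑ k ∈ range (n + 1),
      (n.choose k : ℂ) * (-2) ^ k * ((Complex.I * x + 1)⁻¹) ^ (k + 1) := by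
  have hz : Complex.I * (x : ℂ) + 1 ≠ 0 := I_mul_ofReal_add_one_ne_zero x
  have h_split : Complex.I * (x : ℂ) - 1 = -2 + (Complex.I * x + 1) := by ring
  rw [christov, ← Nat.cast_add_one, zpow_natCast, zpow_natCast, h_split, add_pow, sum_div]
  refine sum_congr rfl fun k hk => ?_
  have h_exp : n + 1 = (n - k) + (k + 1) := by
    have := mem_range.1 hk
    omega
  rw [h_exp, pow_add _ (n - k), inv_pow]
  field_simp

lemma christov'_natCast (n : ℕ) (x : ℝ) :
    christov' n x = ∑ k ∈ range (n + 1), (n.choose k : ℂ) * (-2) ^ k *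
      (-(k + 1) * Complex.I * ((Complex.I * x + 1)⁻¹) ^ (k + 2)) := by
  rw [christov', funext (christov_natCast n)]
  refine (HasDerivAt.fun_sum fun k _ => HasDerivAt.const_mul _ ?_).deriv
  have h_affine : HasDerivAt (fun x : ℝ => Complex.I * (x : ℂ) + 1) Complex.I x := by
    simpa using ((hasDerivAt_id x).ofReal_comp.const_mul Complex.I).add_const 1
  refine ((h_affine.inv (I_mul_ofReal_add_one_ne_zero x)).pow (k + 1)).congr_deriv ?_
  simp only [Nat.add_sub_cancel, Pi.inv_apply, div_eq_mul_inv, ← inv_pow]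
  push_cast
  ring

lemma christov'_sub_christov'_mul (n : ℕ) (x y : ℝ) (c : ℂ) :
    (christov' n (x - y) - christov' n (x + y)) * c = ∑ k ∈ range (n + 1),
      (n.choose k : ℂ) * (-2) ^ k * (-(k + 1) * Complex.I) *
        (invPowDiff (k + 1) (Complex.I * x + 1) y * c) := by
  have h_sub : Complex.I * ((x - y : ℝ) : ℂ) + 1 = Complex.I * x + 1 - Complex.I * y := by
    push_cast; ring
  have h_add : Complex.I * ((x + y : ℝ) : ℂ) + 1 = Complex.I * x + 1 + Complex.I * y := by
    push_cast; ring
  rw [christov'_natCast, christov'_natCast, h_sub, h_add, ← sum_sub_distrib, sum_mul]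
  refine sum_congr rfl fun k _ => ?_
  rw [invPowDiff]
  ring

lemma integrableOn_christov_term (hα : α ∈ Set.Ioo (-1) 2) (x : ℝ) (k : ℕ) (c : ℂ) :
    IntegrableOn (fun y : ℝ => c * (invPowDiff (k + 1) (Complex.I * x + 1) y *
      ((y ^ (-α) : ℝ) : ℂ))) (Set.Ioi 0) :=
  (integrableOn_invPowDiff_mul_rpow
    (by push_cast; linarith [hα.1, k.cast_nonneg (α := ℝ)]) hα.2 (by simp)).const_mul c

lemma integrableOn_christov'_sub_mul_rpow (hα : α ∈ Set.Ioo (-1) 2) (n : ℕ) (x : ℝ) :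
    IntegrableOn (fun y : ℝ =>
      (christov' n (x - y) - christov' n (x + y)) * ((y ^ (-α) : ℝ) : ℂ)) (Set.Ioi 0) := by
  simp only [christov'_sub_christov'_mul]
  exact integrable_finsetSum _ fun k _ => integrableOn_christov_term hα x k _

lemma integral_christov'_sub_mul_rpow (hα : α ∈ Set.Ioo (-1) 2) (n : ℕ) (x : ℝ) :
    ∫ y in Set.Ioi (0 : ℝ),
        (christov' n (x - y) - christov' n (x + y)) * ((y ^ (-α) : ℝ) : ℂ) =
      ((2 * (Real.Gamma (1 - α / 2) * Real.Gamma (1 + α / 2)) : ℝ) : ℂ) /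
        (Complex.I * x + 1) ^ (1 + (α : ℂ)) * ∑ k ∈ range (n + 1),
          gbinom n k * gbinom (-1 - α) k * (2 / (Complex.I * x + 1)) ^ k := by
  simp only [christov'_sub_christov'_mul]
  rw [integral_finsetSum _ fun k _ => integrableOn_christov_term hα x k _, mul_sum]
  refine sum_congr rfl fun k _ => ?_
  have hz : Complex.I * (x : ℂ) + 1 ≠ 0 := I_mul_ofReal_add_one_ne_zero x
  have hk : (k : ℂ) + 1 ≠ 0 := Nat.cast_add_one_ne_zero k
  have h_neg : (-2 : ℂ) ^ k * (-1) ^ k = 2 ^ k := by rw [← mul_pow]; norm_num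
  rw [integral_const_mul, ← invPowDiffIntegral, invPowDiffIntegral_add_one hα k (by simp),
    gbinom_natCast, div_pow, ← h_neg]
  have h_cpow : (Complex.I * (x : ℂ) + 1) ^ (1 + (α : ℂ)) ≠ 0 := fun h =>
    hz ((Complex.cpow_eq_zero_iff _ _).1 h).1
  generalize Real.Gamma (1 - α / 2) * Real.Gamma (1 + α / 2) = G
  push_cast
  field_simp
  rw [Complex.I_sq]
  ring

theorem fracLap_christov_nonneg_general {α : ℝ} (hα : α ∈ Set.Ioo (-1) 2) (hα₀ : α ≠ 0) (n : ℕ)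
    (x : ℝ) :
    IntegrableOn (fun y : ℝ =>
        (christov' n (x - y) - christov' n (x + y)) * ((y ^ (-α) : ℝ) : ℂ)) (Set.Ioi 0) ∧
    ((cFrac α / α : ℝ) : ℂ) * ∫ y in Set.Ioi (0 : ℝ),
        (christov' n (x - y) - christov' n (x + y)) * ((y ^ (-α) : ℝ) : ℂ) =
      (Real.Gamma (1 + α) : ℂ) / (Complex.I * x + 1) ^ ((1 : ℂ) + α) *
        ∑ k ∈ range (n + 1), gbinom n k * gbinom (-1 - α) k * (2 / (Complex.I * x + 1)) ^ k := by
  refine ⟨integrableOn_christov'_sub_mul_rpow hα n x, ?_⟩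
  rw [integral_christov'_sub_mul_rpow hα, ← mul_assoc, ← mul_div_assoc, ← Complex.ofReal_mul,
    cFrac_div_mul_Gamma_mul_Gamma hα.2 hα₀]

end Christov

theorem fracLap_christov_nonneg (α : ℝ) (hα : α ∈ Set.Ioo (0 : ℝ) 2) (n : ℕ) (x : ℝ) :
    IntegrableOn (fun y : ℝ =>
        (christov' (n : ℤ) (x - y) - christov' (n : ℤ) (x + y)) * ((y ^ (-α) : ℝ) : ℂ))
      (Set.Ioi 0) ∧
    ((cFrac α / α : ℝ) : ℂ) *
        ∫ y in Set.Ioi (0 : ℝ),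
          (christov' (n : ℤ) (x - y) - christov' (n : ℤ) (x + y)) * ((y ^ (-α) : ℝ) : ℂ) =
      ((Real.Gamma (1 + α) : ℂ) / (Complex.I * (x : ℂ) + 1) ^ ((1 : ℂ) + (α : ℂ))) *
        ∑ k ∈ Finset.range (n + 1),
          gbinom (n : ℂ) k * gbinom (-1 - (α : ℂ)) k *
            (2 / (Complex.I * (x : ℂ) + 1)) ^ k := by
  exact fracLap_christov_nonneg_general ⟨by linarith [hα.1], hα.2⟩ hα.1.ne' n x
end

section
/- Let α ∈ (0,2), m ∈ ℕ, set n = −1−m (so n ≤ −1), and let x ∈ ℝ. Then the function y ↦ (μ_n'(x−y) − μ_n'(x+y))·y^(−α) is absolutely integrable on (0,∞), and (c_α/α)·∫₀^∞ (μ_n'(x−y) − μ_n'(x+y))·y^(−α) dy = −(Γ(1+α)/(1−ix)^(1+α)) · ∑_{k=0}^{m} C(m,k)·C(−1−α,k)·(2/(1−ix))^k. (The right-hand side is −(Γ(1+α)/(−ix+1)^(1+α))·₂F₁(1+n, 1+α; 1; 2/(−ix+1)).) -/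
open MeasureTheory Finset

/-!
If `u' = ∫ i t h(t) e^(ity) dt` over the frequencies `t > 0`, then `u'(x - y) - u'(x + y)` is twice
the sine transform of `t h(t) e^(itx)`. Writing `Γ((1+α)/2) y^(-α)` as the mixture
`∫ r^((α-1)/2) y e^(-r y²) dr` of Gaussians and exchanging integrals, which becomes legitimate once
each sine transform is damped by a Gaussian, shows that `(-Δ)^(α/2)` multiplies the frequency `t` by
`t^α`. The functions `(w - iy)^(-a)` are superpositions of this kind with Gamma densities, so their
fractional Laplacians are again powers, and by the binomial theorem the Christov function of index
`-1 - m` is a combination of `(1 - iy)^(-(k+1))`, `k ≤ m`.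
-/

/-! ### Laplace integrals of complex powers -/

section
open Filter Topology

lemma integrableOn_rpow_mul_exp_neg_mul {a r : ℝ} (ha : -1 < a) (hr : 0 < r) :
    IntegrableOn (fun t : ℝ => t ^ a * Real.exp (-(r * t))) (Set.Ioi 0) := by
  simpa using integrableOn_rpow_mul_exp_neg_mul_rpow ha one_pos hr

lemma norm_cpow_mul_cexp_neg_mul {t : ℝ} (ht : 0 < t) (a z : ℂ) :
    ‖(t : ℂ) ^ a * Complex.exp (-(z * t))‖ = t ^ a.re * Real.exp (-(z.re * t)) := by
  simp [Complex.norm_cpow_eq_rpow_re_of_pos ht, Complex.norm_exp]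

lemma integrableOn_cpow_mul_cexp_neg_mul {a z : ℂ} (ha : -1 < a.re) (hz : 0 < z.re) :
    IntegrableOn (fun t : ℝ => (t : ℂ) ^ a * Complex.exp (-(z * t))) (Set.Ioi 0) := by
  refine (integrableOn_rpow_mul_exp_neg_mul ha hz).mono'
    (Measurable.aestronglyMeasurable (by fun_prop)) ?_
  filter_upwards [self_mem_ae_restrict measurableSet_Ioi] with t ht
  exact (norm_cpow_mul_cexp_neg_mul ht a z).le

lemma hasDerivAt_integral_cpow_mul_cexp_neg_mul {a z : ℂ} (ha : -1 < a.re) (hz : 0 < z.re) :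
    HasDerivAt (fun z : ℂ => ∫ t in Set.Ioi (0 : ℝ), (t : ℂ) ^ a * Complex.exp (-(z * t)))
      (∫ t in Set.Ioi (0 : ℝ), (t : ℂ) ^ a * (Complex.exp (-(z * t)) * -t)) z := by
  have hnhds : {ζ : ℂ | z.re / 2 < ζ.re} ∈ 𝓝 z :=
    (isOpen_lt continuous_const Complex.continuous_re).mem_nhds (half_lt_self hz)
  refine (hasDerivAt_integral_of_dominated_loc_of_deriv_le
    (F := fun (ζ : ℂ) (t : ℝ) => (t : ℂ) ^ a * Complex.exp (-(ζ * t)))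
    (F' := fun (ζ : ℂ) (t : ℝ) => (t : ℂ) ^ a * (Complex.exp (-(ζ * t)) * -t))
    (bound := fun t => t ^ (a.re + 1) * Real.exp (-(z.re / 2 * t))) hnhds
    (Eventually.of_forall fun _ => Measurable.aestronglyMeasurable (by fun_prop))
    (integrableOn_cpow_mul_cexp_neg_mul ha hz) (Measurable.aestronglyMeasurable (by fun_prop))
    ?_ (integrableOn_rpow_mul_exp_neg_mul (by linarith) (half_pos hz)) ?_).2
  · filter_upwards [self_mem_ae_restrict measurableSet_Ioi] with t (ht : 0 < t) ζ hζ
    calc ‖(t : ℂ) ^ a * (Complex.exp (-(ζ * t)) * -t)‖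
        = t ^ (a.re + 1) * Real.exp (-(ζ.re * t)) := by
          rw [← mul_assoc, norm_mul, norm_cpow_mul_cexp_neg_mul ht, norm_neg,
            Complex.norm_of_nonneg ht.le, Real.rpow_add_one ht.ne', mul_right_comm]
      _ ≤ t ^ (a.re + 1) * Real.exp (-(z.re / 2 * t)) := by
          gcongr
  · filter_upwards with t ζ _
    simpa using (((hasDerivAt_id ζ).mul_const (t : ℂ)).neg.cexp).const_mul ((t : ℂ) ^ a)

-- Both sides are analytic in the right half-plane, so the case of real `z` suffices.
theorem integral_cpow_mul_cexp_neg_mul {a z : ℂ} (ha : 0 < a.re) (hz : 0 < z.re) :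
    ∫ t in Set.Ioi (0 : ℝ), (t : ℂ) ^ (a - 1) * Complex.exp (-(z * t)) =
      Complex.Gamma a * z ^ (-a) := by
  have hopen : IsOpen {ζ : ℂ | 0 < ζ.re} := isOpen_lt continuous_const Complex.continuous_re
  have hleft : AnalyticOnNhd ℂ (fun ζ : ℂ => ∫ t in Set.Ioi (0 : ℝ),
      (t : ℂ) ^ (a - 1) * Complex.exp (-(ζ * t))) {ζ | 0 < ζ.re} :=
    DifferentiableOn.analyticOnNhd (fun ζ hζ => (hasDerivAt_integral_cpow_mul_cexp_neg_mul
      (by simpa using ha) hζ).differentiableAt.differentiableWithinAt) hopen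
  have hright : AnalyticOnNhd ℂ (fun ζ : ℂ => Complex.Gamma a * ζ ^ (-a)) {ζ | 0 < ζ.re} :=
    DifferentiableOn.analyticOnNhd (fun ζ hζ => ((differentiableAt_id.cpow_const
      (Or.inl hζ)).const_mul _).differentiableWithinAt) hopen
  have hreal : ∀ᶠ r : ℝ in 𝓝[≠] 1, ∫ t in Set.Ioi (0 : ℝ),
      (t : ℂ) ^ (a - 1) * Complex.exp (-((r : ℂ) * t)) = Complex.Gamma a * (r : ℂ) ^ (-a) := by
    filter_upwards [nhdsWithin_le_nhds (Ioi_mem_nhds one_pos)] with r (hr : 0 < r)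
    rw [Complex.integral_cpow_mul_exp_neg_mul_Ioi ha hr, one_div, Complex.cpow_neg,
      Complex.inv_cpow _ _ (by simp [Complex.arg_ofReal_of_nonneg hr.le, Real.pi_pos.ne]), mul_comm]
  have hofReal : Tendsto ((↑) : ℝ → ℂ) (𝓝[≠] 1) (𝓝[≠] 1) :=
    Complex.continuous_ofReal.continuousWithinAt.tendsto_nhdsWithin
      fun r hr => by simpa using hr
  exact hleft.eqOn_of_preconnected_of_frequently_eq hright
    (convex_halfSpace_re_gt 0).isPreconnected (by simp) (hofReal.frequently hreal.frequently) hz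
end

/-! ### Gaussian subordination -/

lemma integral_rpow_mul_exp_neg_div {s c : ℝ} (hs : 0 < s) (hc : 0 < c) :
    ∫ r in Set.Ioi (0 : ℝ), r ^ (-s - 1) * Real.exp (-(c / r)) = Real.Gamma s * c ^ (-s) := by
  have hinv : ∫ r in Set.Ioi (0 : ℝ), r ^ (-s - 1) * Real.exp (-(c / r)) =
      ∫ t in Set.Ioi (0 : ℝ), t ^ (s - 1) * Real.exp (-(c * t)) := by
    rw [← integral_comp_rpow_Ioi (fun t => t ^ (s - 1) * Real.exp (-(c * t)))
      (neg_ne_zero.mpr one_ne_zero)]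
    refine setIntegral_congr_fun measurableSet_Ioi fun r (hr : 0 < r) => ?_
    have hpow : r ^ (-s - 1) = r ^ (-1 - 1 : ℝ) * (r ^ (-1 : ℝ)) ^ (s - 1) := by
      rw [← Real.rpow_mul hr.le, ← Real.rpow_add hr]
      ring_nf
    simp only [hpow, abs_neg, abs_one, one_mul, smul_eq_mul, Real.rpow_neg_one, div_eq_mul_inv,
      mul_assoc]
  rw [hinv, Real.integral_rpow_mul_exp_neg_mul_Ioi hs hc, one_div, Real.inv_rpow hc.le,
    Real.rpow_neg hc.le, mul_comm]

lemma integral_cos_mul_exp_neg_mul_sq {r : ℝ} (hr : 0 < r) (t : ℝ) :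
    ∫ y : ℝ, Real.cos (t * y) * Real.exp (-r * y ^ 2) =
      √(Real.pi / r) * Real.exp (-t ^ 2 / (4 * r)) := by
  have h := congrArg Complex.re (fourierIntegral_gaussian (b := r) (by simpa using hr) t)
  have hint : Integrable fun y : ℝ =>
      Complex.exp (Complex.I * t * y) * Complex.exp (-r * y ^ 2) := by
    refine Integrable.bdd_mul (c := 1) ?_ (by fun_prop) ?_
    · simpa using (integrable_exp_neg_mul_sq hr).ofReal (𝕜 := ℂ)
    · filter_upwards with y
      simp [Complex.norm_exp]
  have hre (y : ℝ) : Real.cos (t * y) * Real.exp (-r * y ^ 2) =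
      (Complex.exp (Complex.I * t * y) * Complex.exp (-r * y ^ 2)).re := by
    rw [← Complex.exp_add, Complex.exp_re]
    simp [pow_two, mul_comm]
  have hgauss : ((Real.pi / r : ℂ) ^ (1 / 2 : ℂ) * Complex.exp (-t ^ 2 / (4 * r))) =
      ((√(Real.pi / r) * Real.exp (-t ^ 2 / (4 * r)) : ℝ) : ℂ) := by
    rw [Real.sqrt_eq_rpow, Complex.ofReal_mul, Complex.ofReal_cpow (by positivity)]
    push_cast
    rfl
  simp only [hre]
  rw [← Complex.ofReal_re (√(Real.pi / r) * Real.exp (-t ^ 2 / (4 * r))), ← hgauss, ← h]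
  exact integral_re hint

lemma integral_mul_sin_mul_exp_neg_mul_sq {r : ℝ} (hr : 0 < r) (t : ℝ) :
    ∫ y : ℝ, Real.sin (t * y) * (y * Real.exp (-r * y ^ 2)) =
      t / (2 * r) * (√(Real.pi / r) * Real.exp (-t ^ 2 / (4 * r))) := by
  have hgauss := integrable_exp_neg_mul_sq hr
  have hderiv (y : ℝ) : HasDerivAt (fun y => -Real.exp (-r * y ^ 2) / (2 * r))
      (y * Real.exp (-r * y ^ 2)) y := by
    refine (((hasDerivAt_pow 2 y).const_mul (-r)).exp.neg.div_const (2 * r)).congr_deriv ?_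
    norm_num
    field_simp
  have hparts := integral_mul_deriv_eq_deriv_mul_of_integrable
    (u := fun y => Real.sin (t * y)) (u' := fun y => Real.cos (t * y) * t)
    (fun y _ => by simpa using ((hasDerivAt_id y).const_mul t).sin)
    (fun y _ => hderiv y)
    ((integrable_mul_exp_neg_mul_sq hr).bdd_mul (c := 1) (by fun_prop)
      (.of_forall fun y => Real.abs_sin_le_one _))
    ((hgauss.neg.div_const _).bdd_mul (c := |t|) (by fun_prop)
      (.of_forall fun y => by
        simpa [abs_mul] using mul_le_of_le_one_left (abs_nonneg t) (Real.abs_cos_le_one (t * y))))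
    ((hgauss.neg.div_const _).bdd_mul (c := 1) (by fun_prop)
      (.of_forall fun y => Real.abs_sin_le_one _))
  rw [hparts, ← integral_cos_mul_exp_neg_mul_sq hr, ← integral_const_mul, ← integral_neg]
  congr with y
  ring

lemma setIntegral_mul_sin_mul_exp_neg_mul_sq {r : ℝ} (hr : 0 < r) (t : ℝ) :
    ∫ y in Set.Ioi (0 : ℝ), Real.sin (t * y) * (y * Real.exp (-r * y ^ 2)) =
      √Real.pi / 4 * t * (r ^ (-(3 / 2) : ℝ) * Real.exp (-(t ^ 2 / 4 / r))) := by
  have heven := integral_comp_abs (f := fun y => Real.sin (t * y) * (y * Real.exp (-r * y ^ 2)))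
  have habs (y : ℝ) : Real.sin (t * |y|) * (|y| * Real.exp (-r * |y| ^ 2)) =
      Real.sin (t * y) * (y * Real.exp (-r * y ^ 2)) := by
    rcases abs_choice y with h | h <;> simp [h]
  have hpow : r ^ (-(3 / 2) : ℝ) = (r * √r)⁻¹ := by
    rw [Real.rpow_neg hr.le, Real.sqrt_eq_rpow, ← Real.rpow_one_add' hr.le (by norm_num)]
    norm_num
  have hexp : -t ^ 2 / (4 * r) = -(t ^ 2 / 4 / r) := by ring
  simp only [habs, integral_mul_sin_mul_exp_neg_mul_sq hr, Real.sqrt_div Real.pi_nonneg,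
    hexp] at heven
  rw [hpow, ← mul_right_inj' two_ne_zero, ← heven]
  field_simp
  norm_num

section
variable {X Y E : Type*} [MeasurableSpace X] [MeasurableSpace Y] [NormedAddCommGroup E]
  [NormedSpace ℝ E] [CompleteSpace E] {μ : Measure X} {ν : Measure Y} [SFinite μ] [SFinite ν]

theorem integral_integral_smul_swap_of_nonneg {K : X → Y → ℝ} {k : X → ℝ} {g : X → E}
    (hK : AEStronglyMeasurable (Function.uncurry K) (μ.prod ν)) (hg : AEStronglyMeasurable g μ)
    (hK_nonneg : ∀ᵐ x ∂μ, ∀ᵐ y ∂ν, 0 ≤ K x y) (hK_int : ∀ᵐ x ∂μ, Integrable (K x) ν)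
    (hk : ∀ᵐ x ∂μ, ∫ y, K x y ∂ν = k x) (hkg : Integrable (fun x => k x • g x) μ) :
    ∫ y, ∫ x, K x y • g x ∂μ ∂ν = ∫ x, k x • g x ∂μ := by
  have hint : Integrable (Function.uncurry fun x y => K x y • g x) (μ.prod ν) := by
    refine (integrable_prod_iff (hK.smul hg.comp_fst)).mpr ⟨?_, hkg.norm.congr ?_⟩
    · filter_upwards [hK_int] with x hx using hx.smul_const (g x)
    · filter_upwards [hK_nonneg, hk] with x hx hkx
      have hkx_nonneg : 0 ≤ k x := hkx ▸ integral_nonneg_of_ae hx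
      rw [norm_smul, Real.norm_of_nonneg hkx_nonneg, ← hkx, ← integral_mul_const]
      refine integral_congr_ae ?_
      filter_upwards [hx] with y hy
      simp [norm_smul, abs_of_nonneg hy]
  rw [← integral_integral_swap hint]
  refine integral_congr_ae ?_
  filter_upwards [hk] with x hkx
  rw [integral_smul_const, hkx]
end

section
variable {E : Type*} [NormedAddCommGroup E] [NormedSpace ℝ E] {g : ℝ → E}

/-- The sine transform `y ↦ ∫ sin(ty) g(t) dt` over the half-line `t > 0`, without normalizing
constant. -/
noncomputable def sineTransform (g : ℝ → E) (y : ℝ) : E :=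
  ∫ t in Set.Ioi (0 : ℝ), Real.sin (t * y) • g t

variable [CompleteSpace E]

lemma setIntegral_mul_exp_neg_mul_sq_smul_sineTransform {r : ℝ} (hr : 0 < r)
    (hg : IntegrableOn g (Set.Ioi 0)) :
    ∫ y in Set.Ioi (0 : ℝ), (y * Real.exp (-r * y ^ 2)) • sineTransform g y =
      ∫ t in Set.Ioi (0 : ℝ),
        (√Real.pi / 4 * t * (r ^ (-(3 / 2) : ℝ) * Real.exp (-(t ^ 2 / 4 / r)))) • g t := by
  have hint : Integrable (Function.uncurry fun y t =>
      Real.sin (t * y) • (y * Real.exp (-r * y ^ 2)) • g t)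
      ((volume.restrict (Set.Ioi 0)).prod (volume.restrict (Set.Ioi 0))) :=
    ((integrable_mul_exp_neg_mul_sq hr).integrableOn.smul_prod hg).bdd_smul 1
      (Measurable.aestronglyMeasurable (by fun_prop))
      (.of_forall fun p => Real.abs_sin_le_one _)
  calc ∫ y in Set.Ioi (0 : ℝ), (y * Real.exp (-r * y ^ 2)) • sineTransform g y
      = ∫ y in Set.Ioi (0 : ℝ), ∫ t in Set.Ioi (0 : ℝ),
          Real.sin (t * y) • (y * Real.exp (-r * y ^ 2)) • g t := by
        simp only [sineTransform, ← integral_smul, smul_comm (Real.sin _)]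
    _ = ∫ t in Set.Ioi (0 : ℝ), ∫ y in Set.Ioi (0 : ℝ),
          Real.sin (t * y) • (y * Real.exp (-r * y ^ 2)) • g t := integral_integral_swap hint
    _ = _ := by
        simp only [smul_smul]
        simp only [integral_smul_const, setIntegral_mul_sin_mul_exp_neg_mul_sq hr]

lemma integral_rpow_mul_mul_exp_neg_mul_sq {α y : ℝ} (hα : -1 < α) (hy : 0 < y) :
    ∫ r in Set.Ioi (0 : ℝ), r ^ ((α - 1) / 2) * (y * Real.exp (-r * y ^ 2)) =
      Real.Gamma ((1 + α) / 2) * y ^ (-α) := by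
  have hpow : (1 / y ^ 2) ^ ((1 + α) / 2) * y = y ^ (-α) := by
    rw [one_div, ← Real.rpow_natCast, ← Real.rpow_neg hy.le, ← Real.rpow_mul hy.le,
      ← Real.rpow_add_one hy.ne']
    congr 1
    push_cast
    ring
  have hgamma := Real.integral_rpow_mul_exp_neg_mul_Ioi (a := (1 + α) / 2) (r := y ^ 2)
    (by linarith) (by positivity)
  calc ∫ r in Set.Ioi (0 : ℝ), r ^ ((α - 1) / 2) * (y * Real.exp (-r * y ^ 2))
      = y * ∫ r in Set.Ioi (0 : ℝ), r ^ ((1 + α) / 2 - 1) * Real.exp (-(y ^ 2 * r)) := by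
        rw [← integral_const_mul]
        congr with r
        ring_nf
    _ = Real.Gamma ((1 + α) / 2) * y ^ (-α) := by
        rw [hgamma, ← hpow]
        ring

lemma integral_rpow_mul_rpow_mul_exp_neg_div {α t : ℝ} (hα : α < 2) (ht : 0 < t) :
    ∫ r in Set.Ioi (0 : ℝ), r ^ ((α - 1) / 2) *
      (√Real.pi / 4 * t * (r ^ (-(3 / 2) : ℝ) * Real.exp (-(t ^ 2 / 4 / r)))) =
      √Real.pi * 2 ^ (-α) * Real.Gamma (1 - α / 2) * t ^ (α - 1) := by
  have hpow : t / 4 * (t ^ 2 / 4) ^ (-(1 - α / 2)) = 2 ^ (-α) * t ^ (α - 1) := by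
    rw [show t ^ 2 / 4 = (t / 2) ^ (2 : ℝ) by norm_num [div_pow], ← Real.rpow_mul (by positivity),
      show 2 * -(1 - α / 2) = α - 1 - 1 by ring, Real.rpow_sub_one (by positivity),
      Real.div_rpow ht.le two_pos.le, Real.rpow_sub_one two_ne_zero, Real.rpow_neg two_pos.le]
    field_simp
    norm_num
  have hgamma := integral_rpow_mul_exp_neg_div (s := 1 - α / 2) (c := t ^ 2 / 4)
    (by linarith) (by positivity)
  calc _ = √Real.pi / 4 * t *
        ∫ r in Set.Ioi (0 : ℝ), r ^ (-(1 - α / 2) - 1) * Real.exp (-(t ^ 2 / 4 / r)) := by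
        rw [← integral_const_mul]
        refine setIntegral_congr_fun measurableSet_Ioi fun r (hr : 0 < r) => ?_
        have : r ^ (-(1 - α / 2) - 1) = r ^ ((α - 1) / 2) * r ^ (-(3 / 2) : ℝ) := by
          rw [← Real.rpow_add hr]
          ring_nf
        simp only [this]
        ring
    _ = √Real.pi * 2 ^ (-α) * Real.Gamma (1 - α / 2) * t ^ (α - 1) := by
        rw [hgamma]
        linear_combination √Real.pi * Real.Gamma (1 - α / 2) * hpow

lemma Gamma_smul_setIntegral_rpow_neg_smul {α : ℝ} {f : ℝ → E} (hα : -1 < α)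
    (hf : IntegrableOn (fun y => y ^ (-α) • f y) (Set.Ioi 0)) :
    Real.Gamma ((1 + α) / 2) • ∫ y in Set.Ioi (0 : ℝ), y ^ (-α) • f y =
      ∫ r in Set.Ioi (0 : ℝ), r ^ ((α - 1) / 2) •
        ∫ y in Set.Ioi (0 : ℝ), (y * Real.exp (-r * y ^ 2)) • f y := by
  have hΓ : Real.Gamma ((1 + α) / 2) ≠ 0 := (Real.Gamma_pos_of_pos (by linarith)).ne'
  have hpos : ∀ᵐ t : ℝ ∂volume.restrict (Set.Ioi 0), 0 < t :=
    self_mem_ae_restrict measurableSet_Ioi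
  have hf_meas : AEStronglyMeasurable f (volume.restrict (Set.Ioi 0)) := by
    have hrpow : Measurable fun y : ℝ => (y ^ (-α))⁻¹ := by fun_prop
    refine (hrpow.aestronglyMeasurable.smul hf.aestronglyMeasurable).congr ?_
    filter_upwards [hpos] with y hy using inv_smul_smul₀ (Real.rpow_pos_of_pos hy _).ne' _
  simp only [← integral_smul, smul_smul]
  refine (integral_integral_smul_swap_of_nonneg (Measurable.aestronglyMeasurable (by fun_prop))
    hf_meas ?_ ?_ ?_ ?_).symm
  · filter_upwards [hpos] with y hy
    filter_upwards [hpos] with r hr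
    positivity
  · filter_upwards [hpos] with y hy
    refine .of_integral_ne_zero ?_
    rw [integral_rpow_mul_mul_exp_neg_mul_sq hα hy]
    positivity
  · filter_upwards [hpos] with y hy using integral_rpow_mul_mul_exp_neg_mul_sq hα hy
  · simpa only [Pi.smul_def, smul_smul] using hf.smul (Real.Gamma ((1 + α) / 2))

lemma setIntegral_rpow_smul_setIntegral_exp_neg_div_smul {α : ℝ} (hα : α < 2)
    (hg : AEStronglyMeasurable g (volume.restrict (Set.Ioi 0)))
    (hgα : IntegrableOn (fun t => t ^ (α - 1) • g t) (Set.Ioi 0)) :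
    ∫ r in Set.Ioi (0 : ℝ), r ^ ((α - 1) / 2) • ∫ t in Set.Ioi (0 : ℝ),
        (√Real.pi / 4 * t * (r ^ (-(3 / 2) : ℝ) * Real.exp (-(t ^ 2 / 4 / r)))) • g t =
      (√Real.pi * 2 ^ (-α) * Real.Gamma (1 - α / 2)) •
        ∫ t in Set.Ioi (0 : ℝ), t ^ (α - 1) • g t := by
  have hΓ : Real.Gamma (1 - α / 2) ≠ 0 := (Real.Gamma_pos_of_pos (by linarith)).ne'
  have hpos : ∀ᵐ t : ℝ ∂volume.restrict (Set.Ioi 0), 0 < t :=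
    self_mem_ae_restrict measurableSet_Ioi
  simp only [← integral_smul, smul_smul]
  refine integral_integral_smul_swap_of_nonneg
    (Measurable.aestronglyMeasurable (by fun_prop)) hg ?_ ?_ ?_ ?_
  · filter_upwards [hpos] with t ht
    filter_upwards [hpos] with r hr
    positivity
  · filter_upwards [hpos] with t ht
    refine .of_integral_ne_zero ?_
    rw [integral_rpow_mul_rpow_mul_exp_neg_div hα ht]
    positivity
  · filter_upwards [hpos] with t ht using integral_rpow_mul_rpow_mul_exp_neg_div hα ht
  · simpa only [Pi.smul_def, smul_smul] using
      hgα.smul (√Real.pi * 2 ^ (-α) * Real.Gamma (1 - α / 2))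

theorem Gamma_smul_setIntegral_rpow_neg_smul_sineTransform {α : ℝ} (hα : α ∈ Set.Ioo (-1 : ℝ) 2)
    (hg : IntegrableOn g (Set.Ioi 0))
    (hgα : IntegrableOn (fun t => t ^ (α - 1) • g t) (Set.Ioi 0))
    (hS : IntegrableOn (fun y => y ^ (-α) • sineTransform g y) (Set.Ioi 0)) :
    Real.Gamma ((1 + α) / 2) • ∫ y in Set.Ioi (0 : ℝ), y ^ (-α) • sineTransform g y =
      (√Real.pi * 2 ^ (-α) * Real.Gamma (1 - α / 2)) •
        ∫ t in Set.Ioi (0 : ℝ), t ^ (α - 1) • g t := by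
  rw [Gamma_smul_setIntegral_rpow_neg_smul hα.1 hS,
    ← setIntegral_rpow_smul_setIntegral_exp_neg_div_smul hα.2 hg.aestronglyMeasurable hgα]
  refine setIntegral_congr_fun measurableSet_Ioi fun r (hr : 0 < r) => ?_
  simp only [setIntegral_mul_exp_neg_mul_sq_smul_sineTransform hr hg]
end

/-! ### The fractional Laplacian of powers -/

section
open Filter Topology Asymptotics
variable {α : ℝ} {a w : ℂ}

/-- `(-Δ)^(α/2) u (x) = v`: the integral defining the fractional Laplacian of `u` at `x` converges
absolutely, and its normalized value is `v`. -/
def HasFracLaplacianAt (α : ℝ) (u : ℝ → ℂ) (v : ℂ) (x : ℝ) : Prop :=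
  IntegrableOn (fun y : ℝ => (deriv u (x - y) - deriv u (x + y)) * ((y ^ (-α) : ℝ) : ℂ))
    (Set.Ioi 0) ∧
  ((cFrac α / α : ℝ) : ℂ) * ∫ y in Set.Ioi (0 : ℝ),
    (deriv u (x - y) - deriv u (x + y)) * ((y ^ (-α) : ℝ) : ℂ) = v

lemma HasFracLaplacianAt.const_mul {u : ℝ → ℂ} {v : ℂ} {x : ℝ}
    (h : HasFracLaplacianAt α u v x) (c : ℂ) :
    HasFracLaplacianAt α (fun y => c * u y) (c * v) x := by
  have hD (y : ℝ) : (deriv (fun y => c * u y) (x - y) - deriv (fun y => c * u y) (x + y)) *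
      ((y ^ (-α) : ℝ) : ℂ) = c * ((deriv u (x - y) - deriv u (x + y)) * ((y ^ (-α) : ℝ) : ℂ)) := by
    simp only [deriv_const_mul_field]
    ring
  unfold HasFracLaplacianAt
  simp only [hD, integral_const_mul]
  exact ⟨h.1.const_mul c, by rw [mul_left_comm, h.2]⟩

lemma HasFracLaplacianAt.sum {ι : Type*} {s : Finset ι} {u : ι → ℝ → ℂ} {v : ι → ℂ} {x : ℝ}
    (hu : ∀ i ∈ s, Differentiable ℝ (u i)) (h : ∀ i ∈ s, HasFracLaplacianAt α (u i) (v i) x) :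
    HasFracLaplacianAt α (fun y => ∑ i ∈ s, u i y) (∑ i ∈ s, v i) x := by
  have hderiv (y : ℝ) : deriv (fun y => ∑ i ∈ s, u i y) y = ∑ i ∈ s, deriv (u i) y :=
    deriv_fun_sum fun i hi => hu i hi y
  unfold HasFracLaplacianAt
  simp only [hderiv, ← sum_sub_distrib, sum_mul]
  refine ⟨integrable_finsetSum _ fun i hi => (h i hi).1, ?_⟩
  rw [integral_finsetSum _ fun i hi => (h i hi).1, mul_sum]
  exact sum_congr rfl fun i hi => (h i hi).2

lemma cFrac_div_mul_eq (hα_ne : α ≠ 0) (hα : α < 2) :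
    cFrac α / α * (2 * (√Real.pi * 2 ^ (-α) * Real.Gamma (1 - α / 2))) =
      Real.Gamma ((1 + α) / 2) := by
  have hΓ : Real.Gamma (1 - α / 2) ≠ 0 := (Real.Gamma_pos_of_pos (by linarith)).ne'
  rw [cFrac, ← add_div, Real.rpow_sub_one two_ne_zero, Real.rpow_neg two_pos.le]
  generalize Real.Gamma (1 - α / 2) = G at hΓ
  field_simp

theorem hasFracLaplacianAt_of_eq_sineTransform (hα : α ∈ Set.Ioo (0 : ℝ) 2) {u g : ℝ → ℂ} {x : ℝ}
    (hsine : ∀ y : ℝ, deriv u (x - y) - deriv u (x + y) = 2 * sineTransform g y)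
    (hg : IntegrableOn g (Set.Ioi 0))
    (hgα : IntegrableOn (fun t => t ^ (α - 1) • g t) (Set.Ioi 0))
    (hD : IntegrableOn (fun y : ℝ =>
      (deriv u (x - y) - deriv u (x + y)) * ((y ^ (-α) : ℝ) : ℂ)) (Set.Ioi 0)) :
    HasFracLaplacianAt α u (∫ t in Set.Ioi (0 : ℝ), t ^ (α - 1) • g t) x := by
  have hΓ : Real.Gamma ((1 + α) / 2) ≠ 0 := (Real.Gamma_pos_of_pos (by linarith [hα.1])).ne'
  have hD_eq (y : ℝ) : (deriv u (x - y) - deriv u (x + y)) * ((y ^ (-α) : ℝ) : ℂ) =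
      (2 : ℝ) • y ^ (-α) • sineTransform g y := by
    simp only [hsine, Complex.real_smul]
    push_cast
    ring
  refine ⟨hD, ?_⟩
  simp only [hD_eq] at hD ⊢
  have hmul := Gamma_smul_setIntegral_rpow_neg_smul_sineTransform ⟨by linarith [hα.1], hα.2⟩ hg hgα
    ((integrable_smul_iff (two_ne_zero (α := ℝ)) _).mp hD)
  rw [← Complex.real_smul, integral_smul, ← smul_right_inj hΓ, smul_comm _ (cFrac α / α),
    smul_comm _ (2 : ℝ), hmul, smul_smul, smul_smul, mul_assoc, cFrac_div_mul_eq hα.1.ne' hα.2]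

lemma I_mul_cexp_sub_sub_cexp_add (t x y : ℝ) :
    Complex.I * (Complex.exp (Complex.I * t * (x - y : ℝ)) -
        Complex.exp (Complex.I * t * (x + y : ℝ))) =
      2 * Complex.sin (t * y) * Complex.exp (Complex.I * t * x) := by
  have hsub : Complex.I * t * (x - y : ℝ) = Complex.I * t * x + -(t * y) * Complex.I := by
    push_cast
    ring
  have hadd : Complex.I * t * (x + y : ℝ) = Complex.I * t * x + t * y * Complex.I := by
    push_cast
    ring
  rw [hsub, hadd, Complex.exp_add, Complex.exp_add]
  linear_combination -Complex.exp (Complex.I * t * x) * Complex.two_sin (t * y)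

theorem hasFracLaplacianAt_of_deriv_eq_integral (hα : α ∈ Set.Ioo (0 : ℝ) 2) {u h : ℝ → ℂ} {x : ℝ}
    (hu : ∀ y : ℝ, deriv u y =
      ∫ t in Set.Ioi (0 : ℝ), Complex.I * (t * h t) * Complex.exp (Complex.I * t * y))
    (hh : IntegrableOn (fun t : ℝ => t * h t) (Set.Ioi 0))
    (hhα : IntegrableOn (fun t : ℝ => (t : ℂ) ^ (α : ℂ) * h t) (Set.Ioi 0))
    (hD : IntegrableOn (fun y : ℝ =>
      (deriv u (x - y) - deriv u (x + y)) * ((y ^ (-α) : ℝ) : ℂ)) (Set.Ioi 0)) :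
    HasFracLaplacianAt α u
      (∫ t in Set.Ioi (0 : ℝ), (t : ℂ) ^ (α : ℂ) * h t * Complex.exp (Complex.I * t * x)) x := by
  have hosc {f : ℝ → ℂ} (hf : IntegrableOn f (Set.Ioi 0) volume) (y : ℝ) :
      IntegrableOn (fun t : ℝ => f t * Complex.exp (Complex.I * t * y)) (Set.Ioi 0) :=
    Integrable.mul_bdd (c := 1) hf (Measurable.aestronglyMeasurable (by fun_prop))
      (.of_forall fun t => by simp [Complex.norm_exp])
  have hsine (y : ℝ) : deriv u (x - y) - deriv u (x + y) =
      2 * sineTransform (fun t => t * h t * Complex.exp (Complex.I * t * x)) y := by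
    rw [hu, hu, ← integral_sub (hosc (hh.const_mul _) _) (hosc (hh.const_mul _) _), sineTransform,
      ← integral_const_mul]
    congr with t
    rw [Complex.real_smul, Complex.ofReal_sin, Complex.ofReal_mul]
    linear_combination t * h t * I_mul_cexp_sub_sub_cexp_add t x y
  have hvalue : Set.EqOn
      (fun t : ℝ => t ^ (α - 1) • (t * h t * Complex.exp (Complex.I * t * x)))
      (fun t : ℝ => (t : ℂ) ^ (α : ℂ) * h t * Complex.exp (Complex.I * t * x)) (Set.Ioi 0) := by
    intro t (ht : 0 < t)
    have hpow : ((t ^ (α - 1) : ℝ) : ℂ) * t = (t : ℂ) ^ (α : ℂ) := by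
      rw [← Complex.ofReal_mul, ← Real.rpow_add_one ht.ne', sub_add_cancel,
        Complex.ofReal_cpow ht.le]
    simp only [Complex.real_smul, ← hpow]
    ring
  rw [← setIntegral_congr_fun measurableSet_Ioi hvalue]
  exact hasFracLaplacianAt_of_eq_sineTransform hα hsine (hosc hh x)
    ((hosc hhα x).congr_fun hvalue.symm measurableSet_Ioi) hD

lemma integrableOn_mul_rpow_neg {b : ℝ} {D : ℝ → ℂ} (hα : α < 2) (hb : 1 - α < b)
    (hcont : Continuous D) (hdiff : DifferentiableAt ℝ D 0) (hzero : D 0 = 0)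
    (hinfty : D =O[atTop] fun y => y ^ (-b)) :
    IntegrableOn (fun y : ℝ => D y * ((y ^ (-α) : ℝ) : ℂ)) (Set.Ioi 0) := by
  have hO : D =O[𝓝[>] 0] fun y : ℝ => y ^ (-(-1) : ℝ) := by
    simpa [hzero] using hdiff.isBigO_sub.mono nhdsWithin_le_nhds
  have hmellin := mellinConvergent_of_isBigO_rpow (s := ((1 - α : ℝ) : ℂ))
    (hcont.locallyIntegrable.locallyIntegrableOn _) hinfty (by simpa using hb) hO
    (by simp; linarith)
  refine IntegrableOn.congr_fun hmellin (fun y (hy : 0 < y) => ?_) measurableSet_Ioi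
  rw [smul_eq_mul, mul_comm, Complex.ofReal_cpow hy.le]
  congr 2
  push_cast
  ring

lemma isBigO_add_mul_ofReal_cpow {z c : ℂ} (hc : c ≠ 0) (b : ℂ) :
    (fun y : ℝ => (z + c * y) ^ b) =O[atTop] fun y => y ^ b.re := by
  have hlin : (fun y : ℝ => z + c * y) =Θ[atTop] fun y => y :=
    (isLittleO_const_id_atTop z).add_isTheta
      ((isTheta_const_mul_left hc).mpr (Complex.isTheta_ofReal _ _))
  have hne : ∀ᶠ y : ℝ in atTop, z + c * y ≠ 0 := by
    filter_upwards [hlin.isBigO_symm.eq_zero_imp, eventually_gt_atTop 0] with y hy hpos hzero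
    exact hpos.ne' (hy hzero)
  refine (Complex.isTheta_cpow_const_rpow fun _ _ => hne).isBigO.trans (IsTheta.isBigO ?_)
  exact hlin.norm_left.rpow (.of_forall fun _ => norm_nonneg _) (eventually_ge_atTop 0)

lemma hasDerivAt_sub_I_mul_cpow (hw : 0 < w.re) (a : ℂ) (y : ℝ) :
    HasDerivAt (fun y : ℝ => (w - Complex.I * y) ^ a)
      (-(Complex.I * a) * (w - Complex.I * y) ^ (a - 1)) y := by
  have h := ((((hasDerivAt_id (y : ℂ)).const_mul Complex.I).const_sub w).cpow_const (c := a)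
    (Or.inl (by simpa using hw))).comp_ofReal
  refine h.congr_deriv ?_
  simp
  ring

lemma integrableOn_deriv_cpow_sub_mul_rpow_neg (hα : α < 2) (haα : 0 < (a + α).re)
    (hw : 0 < w.re) (x : ℝ) :
    IntegrableOn (fun y : ℝ => (deriv (fun y : ℝ => (w - Complex.I * y) ^ (-a)) (x - y) -
      deriv (fun y : ℝ => (w - Complex.I * y) ^ (-a)) (x + y)) * ((y ^ (-α) : ℝ) : ℂ))
      (Set.Ioi 0) := by
  have hderiv : deriv (fun y : ℝ => (w - Complex.I * y) ^ (-a)) =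
      fun y : ℝ => -(Complex.I * -a) * (w - Complex.I * y) ^ (-a - 1) :=
    funext fun y => (hasDerivAt_sub_I_mul_cpow hw (-a) y).deriv
  have hdiff : Differentiable ℝ (deriv fun y : ℝ => (w - Complex.I * y) ^ (-a)) := by
    rw [hderiv]
    exact fun y => (hasDerivAt_sub_I_mul_cpow hw _ y).differentiableAt.const_mul _
  have hdiffD : Differentiable ℝ fun y : ℝ =>
      deriv (fun y : ℝ => (w - Complex.I * y) ^ (-a)) (x - y) -
      deriv (fun y : ℝ => (w - Complex.I * y) ^ (-a)) (x + y) := by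
    fun_prop
  have hdecay {c : ℂ} (hc : c ≠ 0) :=
    (isBigO_add_mul_ofReal_cpow (z := w - Complex.I * x) hc (-a - 1)).const_mul_left
      (-(Complex.I * -a))
  have hb : 1 - α < a.re + 1 := by
    rw [Complex.add_re, Complex.ofReal_re] at haα
    linarith
  refine integrableOn_mul_rpow_neg (b := a.re + 1) hα hb hdiffD.continuous
    (hdiffD 0) (by simp) ?_
  refine ((hdecay Complex.I_ne_zero).sub (hdecay (neg_ne_zero.mpr Complex.I_ne_zero))).congr
    (fun y => ?_) (fun y => ?_)
  · simp only [hderiv]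
    push_cast
    ring_nf
  · simp
    ring_nf

/-- The complex Gamma density `Γ(a)⁻¹ t^(a-1) e^(-wt)` on `t > 0`, normalized so that integrating
it against `e^(ity)` gives `(w - iy)^(-a)`. -/
noncomputable def gammaDensity (a w : ℂ) (t : ℝ) : ℂ :=
  (Complex.Gamma a)⁻¹ * ((t : ℂ) ^ (a - 1) * Complex.exp (-(w * t)))

lemma cpow_mul_gammaDensity_mul_cexp {t : ℝ} (ht : 0 < t) (a b w : ℂ) (y : ℝ) :
    (t : ℂ) ^ b * gammaDensity a w t * Complex.exp (Complex.I * t * y) =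
      (Complex.Gamma a)⁻¹ *
        ((t : ℂ) ^ (a + b - 1) * Complex.exp (-((w - Complex.I * y) * t))) := by
  have hexp : Complex.exp (-((w - Complex.I * y) * t)) =
      Complex.exp (-(w * t)) * Complex.exp (Complex.I * t * y) := by
    rw [← Complex.exp_add]
    ring_nf
  rw [gammaDensity, hexp, show a + b - 1 = b + (a - 1) by ring,
    Complex.cpow_add _ _ (Complex.ofReal_ne_zero.mpr ht.ne')]
  ring

lemma integrableOn_cpow_mul_gammaDensity {b : ℂ} (hab : 0 < (a + b).re) (hw : 0 < w.re) :
    IntegrableOn (fun t : ℝ => (t : ℂ) ^ b * gammaDensity a w t) (Set.Ioi 0) := by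
  have hint : IntegrableOn (fun t : ℝ => (Complex.Gamma a)⁻¹ *
      ((t : ℂ) ^ (a + b - 1) * Complex.exp (-(w * t)))) (Set.Ioi 0) :=
    (integrableOn_cpow_mul_cexp_neg_mul (by simpa using hab) hw).const_mul _
  exact hint.congr_fun
    (fun t ht => by simpa using (cpow_mul_gammaDensity_mul_cexp ht a b w 0).symm) measurableSet_Ioi

lemma integral_cpow_mul_gammaDensity_mul_cexp {b : ℂ} (hab : 0 < (a + b).re) (hw : 0 < w.re)
    (y : ℝ) :
    ∫ t in Set.Ioi (0 : ℝ), (t : ℂ) ^ b * gammaDensity a w t * Complex.exp (Complex.I * t * y) =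
      Complex.Gamma (a + b) / Complex.Gamma a * (w - Complex.I * y) ^ (-(a + b)) := by
  rw [setIntegral_congr_fun measurableSet_Ioi
      fun t ht => cpow_mul_gammaDensity_mul_cexp ht a b w y, integral_const_mul,
    integral_cpow_mul_cexp_neg_mul hab (by simpa using hw)]
  ring

theorem hasFracLaplacianAt_cpow_neg (hα : α ∈ Set.Ioo (0 : ℝ) 2) (ha : 0 < a.re) (hw : 0 < w.re)
    (x : ℝ) :
    HasFracLaplacianAt α (fun y : ℝ => (w - Complex.I * y) ^ (-a))
      (Complex.Gamma (a + α) / Complex.Gamma a * (w - Complex.I * x) ^ (-(a + α))) x := by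
  have ha_one : 0 < (a + 1).re := by simpa using add_pos ha one_pos
  have haα : 0 < (a + α).re := by simpa using add_pos ha hα.1
  rw [← integral_cpow_mul_gammaDensity_mul_cexp haα hw]
  refine hasFracLaplacianAt_of_deriv_eq_integral hα (fun y => ?_) ?_
    (integrableOn_cpow_mul_gammaDensity haα hw)
    (integrableOn_deriv_cpow_sub_mul_rpow_neg hα.2 haα hw x)
  · have hgamma := integral_cpow_mul_gammaDensity_mul_cexp ha_one hw y
    have hΓ : Complex.Gamma a ≠ 0 := Complex.Gamma_ne_zero_of_re_pos ha
    have ha_ne : a ≠ 0 := Complex.ne_zero_of_re_pos ha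
    simp only [Complex.cpow_one] at hgamma
    simp only [mul_assoc Complex.I (_ * _)]
    rw [(hasDerivAt_sub_I_mul_cpow hw (-a) y).deriv, integral_const_mul, hgamma,
      Complex.Gamma_add_one a ha_ne, mul_div_cancel_right₀ a hΓ, neg_add']
    ring
  · simpa using integrableOn_cpow_mul_gammaDensity ha_one hw
end

/-! ### Christov functions of negative index -/

lemma gbinom_natCast_s2 (m k : ℕ) : gbinom m k = m.choose k := by
  rw [gbinom, ← descPochhammer_eval_eq_prod_range, Nat.cast_choose_eq_descPochhammer_div]

lemma Gamma_mul_gbinom_neg {s : ℂ} (hs : ∀ j : ℕ, s ≠ -j) (k : ℕ) :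
    Complex.Gamma s * gbinom (-s) k = (-1) ^ k * (Complex.Gamma (s + k) / k.factorial) := by
  have hasc := ascPochhammer_eval_neg_eq_descPochhammer ℂ (-s) k
  rw [neg_neg, ← Complex.Gamma_add_nat_div_Gamma_eq s hs,
    div_eq_iff (Complex.Gamma_ne_zero hs)] at hasc
  rw [gbinom, ← descPochhammer_eval_eq_prod_range, hasc]
  have hsign : (-1 : ℂ) ^ k * (-1) ^ k = 1 := by simp [← mul_pow]
  linear_combination
    (-(Complex.Gamma s * (descPochhammer ℂ k).eval (-s) / k.factorial)) * hsign

lemma christov_neg_one_sub (m : ℕ) (x : ℝ) :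
    christov (-1 - (m : ℤ)) x = ∑ k ∈ range (m + 1),
      -(m.choose k * (-2) ^ k) * (1 - Complex.I * x) ^ (-((k : ℂ) + 1)) := by
  have hw : 1 - Complex.I * x ≠ 0 := Complex.ne_zero_of_re_pos (by simp)
  set w := 1 - Complex.I * x with hw_def
  have hclosed : christov (-1 - (m : ℤ)) x = -((-2 + w) ^ m / w ^ (m + 1)) := by
    have hnum : Complex.I * x - 1 = -w := by rw [hw_def]; ring
    have hden : Complex.I * x + 1 = -(-2 + w) := by rw [hw_def]; ring
    rw [christov, hnum, hden, show (-1 - (m : ℤ)) = -((m + 1 : ℕ) : ℤ) by push_cast; ring,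
      show -((m + 1 : ℕ) : ℤ) + 1 = -(m : ℤ) by push_cast; ring, zpow_neg, zpow_neg,
      zpow_natCast, zpow_natCast, inv_div_inv, neg_pow (-2 + w), neg_pow w, pow_succ (-1 : ℂ)]
    field_simp
  rw [hclosed, add_pow, sum_div, ← sum_neg_distrib]
  refine sum_congr rfl fun k hk => ?_
  have hk_le : k ≤ m := Nat.lt_succ_iff.mp (mem_range.mp hk)
  have hkm : m + 1 = (m - k) + (k + 1) := by omega
  rw [hkm, pow_add, Complex.cpow_neg, ← Nat.cast_succ, Complex.cpow_natCast]
  field_simp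

lemma choose_mul_Gamma_div_Gamma_mul_cpow {β w : ℂ} (hβ : ∀ j : ℕ, 1 + β ≠ -j) (hw : w ≠ 0)
    (m k : ℕ) :
    m.choose k * (-2) ^ k *
        (Complex.Gamma (k + 1 + β) / Complex.Gamma (k + 1) * w ^ (-(k + 1 + β))) =
      Complex.Gamma (1 + β) / w ^ (1 + β) *
        (gbinom m k * gbinom (-1 - β) k * (2 / w) ^ k) := by
  have hgbinom := Gamma_mul_gbinom_neg hβ k
  rw [neg_add'] at hgbinom
  rw [show (k + 1 + β : ℂ) = 1 + β + k by ring, Complex.Gamma_nat_eq_factorial, gbinom_natCast_s2,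
    Complex.cpow_neg, Complex.cpow_add _ _ hw, Complex.cpow_natCast, neg_pow (2 : ℂ), div_pow]
  linear_combination (-(m.choose k * 2 ^ k / (w ^ (1 + β) * w ^ k))) * hgbinom

theorem fracLap_christov_neg (α : ℝ) (hα : α ∈ Set.Ioo (0 : ℝ) 2) (m : ℕ) (x : ℝ) :
    IntegrableOn (fun y : ℝ =>
        (christov' (-1 - (m : ℤ)) (x - y) - christov' (-1 - (m : ℤ)) (x + y)) *
          ((y ^ (-α) : ℝ) : ℂ)) (Set.Ioi 0) ∧
    ((cFrac α / α : ℝ) : ℂ) *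
        ∫ y in Set.Ioi (0 : ℝ),
          (christov' (-1 - (m : ℤ)) (x - y) - christov' (-1 - (m : ℤ)) (x + y)) *
            ((y ^ (-α) : ℝ) : ℂ) =
      -((Real.Gamma (1 + α) : ℂ) / (1 - Complex.I * (x : ℂ)) ^ ((1 : ℂ) + (α : ℂ))) *
        ∑ k ∈ Finset.range (m + 1),
          gbinom (m : ℂ) k * gbinom (-1 - (α : ℂ)) k *
            (2 / (1 - Complex.I * (x : ℂ))) ^ k := by
  have hw : 1 - Complex.I * x ≠ 0 := Complex.ne_zero_of_re_pos (by simp)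
  have hα_ne (j : ℕ) : (1 + α : ℂ) ≠ -j := by
    have hne : 1 + α ≠ -j := by linarith [hα.1, j.cast_nonneg (α := ℝ)]
    exact_mod_cast hne
  have hterm (k : ℕ) := (hasFracLaplacianAt_cpow_neg (a := k + 1) (w := 1) hα
    (by norm_cast; exact k.succ_pos) (by simp) x).const_mul (-(m.choose k * (-2) ^ k))
  have hdiff (k : ℕ) : Differentiable ℝ fun y : ℝ =>
      -(m.choose k * (-2) ^ k) * (1 - Complex.I * y) ^ (-((k : ℂ) + 1)) := fun y =>
    (hasDerivAt_sub_I_mul_cpow (by simp) _ y).differentiableAt.const_mul _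
  have hsum := HasFracLaplacianAt.sum (s := range (m + 1)) (fun k _ => hdiff k) fun k _ => hterm k
  rw [← funext (christov_neg_one_sub m)] at hsum
  refine ⟨hsum.1, hsum.2.trans ?_⟩
  rw [mul_sum]
  refine sum_congr rfl fun k _ => ?_
  rw [neg_mul, choose_mul_Gamma_div_Gamma_mul_cpow hα_ne hw m k, ← Complex.Gamma_ofReal, neg_mul]
  push_cast
  rfl
end
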